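/- Let m, c, k, ca be positive reals, s ∈ ℂ, and let z₁, z₂ : ℝ → ℂ. Assume: z₁ and z₂ are twice differentiable with continuous first and second derivatives on [0,∞); z₁, z₁', z₂, z₂', z₂'' are all of exponential order a for some real a with a < Re s; z₁(0) = 0, z₂(0) = 0 and z₂'(0) = 0; the differential equation z₂''(t) + ((c + ca)/m)·z₂'(t) + (k/m)·z₂(t) = (c/m)·z₁'(t) + (k/m)·z₁(t) holds for all t ≥ 0; s² + ((c + ca)/m)·s + k/m ≠ 0; and L[z₁](s) ≠ 0. Then L[z₂](s) / L[z₁](s) = ((c/m)·s + k/m) / (s² + ((c + ca)/m)·s + k/m). -/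

import Mathlib

open MeasureTheory

/-- The Laplace transform of `f : ℝ → ℂ` at `s : ℂ`:  `∫ t in (0,∞), e^{-s t} f t`. -/
noncomputable def laplace (f : ℝ → ℂ) (s : ℂ) : ℂ :=
  ∫ t in Set.Ioi (0 : ℝ), Complex.exp (-(s * t)) * f t

/-- `f` is of exponential order `a`: there is `M > 0` with `‖f t‖ ≤ M e^{a t}` for `t ≥ 0`. -/
def ExpOrder (f : ℝ → ℂ) (a : ℝ) : Prop :=
  ∃ M > 0, ∀ t ≥ (0 : ℝ), ‖f t‖ ≤ M * Real.exp (a * t)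

open Set Filter Topology

/-- The integral defining `laplace f s` converges absolutely; without this, `laplace f s` is the
junk value `0`. -/
def LaplaceConvergent (f : ℝ → ℂ) (s : ℂ) : Prop :=
  IntegrableOn (fun t : ℝ => Complex.exp (-(s * t)) * f t) (Ioi 0)

/-- The Laplace transform of `f` converges absolutely at `s` and has the value `L` there, in
analogy with Mathlib's `HasMellin`. -/
def HasLaplace (f : ℝ → ℂ) (s L : ℂ) : Prop :=
  LaplaceConvergent f s ∧ laplace f s = L

section Transform

variable {f g f' : ℝ → ℂ} {s F G : ℂ} {a : ℝ}

theorem LaplaceConvergent.hasLaplace (hf : LaplaceConvergent f s) :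
    HasLaplace f s (laplace f s) :=
  ⟨hf, rfl⟩

theorem HasLaplace.congr (hf : HasLaplace f s F) (hfg : EqOn f g (Ioi 0)) :
    HasLaplace g s F := by
  have integrand_eq : EqOn (fun t : ℝ => Complex.exp (-(s * t)) * f t)
      (fun t : ℝ => Complex.exp (-(s * t)) * g t) (Ioi 0) :=
    fun t ht => congrArg (Complex.exp (-(s * t)) * ·) (hfg ht)
  exact ⟨hf.1.congr_fun integrand_eq measurableSet_Ioi,
    (setIntegral_congr_fun measurableSet_Ioi integrand_eq).symm.trans hf.2⟩

theorem HasLaplace.add (hf : HasLaplace f s F) (hg : HasLaplace g s G) :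
    HasLaplace (fun t => f t + g t) s (F + G) := by
  rw [← hf.2, ← hg.2]
  exact ⟨by simpa only [LaplaceConvergent, mul_add] using! hf.1.add hg.1,
    by simpa only [laplace, mul_add] using! integral_add hf.1 hg.1⟩

theorem HasLaplace.sub (hf : HasLaplace f s F) (hg : HasLaplace g s G) :
    HasLaplace (fun t => f t - g t) s (F - G) := by
  rw [← hf.2, ← hg.2]
  exact ⟨by simpa only [LaplaceConvergent, mul_sub] using! hf.1.sub hg.1,
    by simpa only [laplace, mul_sub] using! integral_sub hf.1 hg.1⟩

theorem HasLaplace.const_mul (hf : HasLaplace f s F) (c : ℂ) :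
    HasLaplace (fun t => c * f t) s (c * F) := by
  rw [← hf.2]
  exact ⟨by simpa only [LaplaceConvergent, mul_left_comm] using! hf.1.const_mul c,
    by simp only [laplace, mul_left_comm _ c, integral_const_mul]⟩

theorem hasDerivAt_exp_neg_mul_mul {t : ℝ} {v : ℂ} (s : ℂ) (hf : HasDerivAt f v t) :
    HasDerivAt (fun t : ℝ => Complex.exp (-(s * t)) * f t)
      (Complex.exp (-(s * t)) * v - s * (Complex.exp (-(s * t)) * f t)) t := by
  have hexponent : HasDerivAt (fun t : ℝ => -(s * (t : ℂ))) (-(s * 1)) t :=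
    (Complex.ofRealCLM.hasDerivAt.const_mul s).neg
  exact (hexponent.cexp.mul hf).congr_deriv (by ring)

theorem laplace_deriv (hderiv : ∀ t ∈ Ici (0 : ℝ), HasDerivWithinAt f (f' t) (Ici 0) t)
    (hf : LaplaceConvergent f s) (hf' : LaplaceConvergent f' s) :
    laplace f' s = s * laplace f s - f 0 := by
  have hcont : ContinuousWithinAt (fun t : ℝ => Complex.exp (-(s * t)) * f t) (Ici 0) 0 :=
    ContinuousWithinAt.mul (by fun_prop) (hderiv 0 self_mem_Ici).continuousWithinAt
  have hderiv_exp_mul (t : ℝ) (ht : t ∈ Ioi 0) :=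
    hasDerivAt_exp_neg_mul_mul s ((hderiv t (le_of_lt ht)).hasDerivAt (Ici_mem_nhds ht))
  have hint := hf'.sub (hf.const_mul s)
  have hlim : Tendsto (fun t : ℝ => Complex.exp (-(s * t)) * f t) atTop (𝓝 0) :=
    tendsto_zero_of_hasDerivAt_of_integrableOn_Ioi hderiv_exp_mul hint hf
  have hparts : laplace f' s - s * laplace f s = -f 0 := by
    simpa [laplace, integral_sub hf' (hf.const_mul s), integral_const_mul] using
      integral_Ioi_of_hasDerivAt_of_tendsto hcont hderiv_exp_mul hint hlim
  linear_combination hparts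

theorem norm_exp_neg_mul_mul_le {M t : ℝ} {w : ℂ} (s : ℂ) (hw : ‖w‖ ≤ M * Real.exp (a * t)) :
    ‖Complex.exp (-(s * t)) * w‖ ≤ M * Real.exp (-(s.re - a) * t) :=
  calc ‖Complex.exp (-(s * t)) * w‖ = Real.exp (-(s.re * t)) * ‖w‖ := by
        simp [Complex.norm_exp]
    _ ≤ Real.exp (-(s.re * t)) * (M * Real.exp (a * t)) := by gcongr
    _ = M * Real.exp (-(s.re - a) * t) := by
        rw [mul_left_comm, ← Real.exp_add]
        ring_nf

theorem ExpOrder.laplaceConvergent (hf : ExpOrder f a)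
    (hmeas : AEStronglyMeasurable f (volume.restrict (Ioi 0))) (ha : a < s.re) :
    LaplaceConvergent f s := by
  obtain ⟨M, -, hM⟩ := hf
  have hbound : IntegrableOn (fun t : ℝ => M * Real.exp (-(s.re - a) * t)) (Ioi 0) :=
    (exp_neg_integrableOn_Ioi 0 (sub_pos.2 ha)).const_mul M
  refine hbound.mono' (.mul (Continuous.aestronglyMeasurable (by fun_prop)) hmeas) ?_
  filter_upwards [ae_restrict_mem measurableSet_Ioi] with t ht
  exact norm_exp_neg_mul_mul_le s (hM t (le_of_lt ht))

theorem ExpOrder.laplaceConvergent_of_continuousOn (hf : ExpOrder f a)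
    (hcont : ContinuousOn f (Ici 0)) (ha : a < s.re) : LaplaceConvergent f s :=
  hf.laplaceConvergent
    ((hcont.mono Ioi_subset_Ici_self).aestronglyMeasurable measurableSet_Ioi) ha

end Transform

section SecondOrder

variable {s p q b d : ℂ} {x y x' y' y'' : ℝ → ℂ}

theorem laplace_of_second_order_ode
    (hdx : ∀ t ∈ Ici (0 : ℝ), HasDerivWithinAt x (x' t) (Ici 0) t)
    (hdy : ∀ t ∈ Ici (0 : ℝ), HasDerivWithinAt y (y' t) (Ici 0) t)
    (hdy' : ∀ t ∈ Ici (0 : ℝ), HasDerivWithinAt y' (y'' t) (Ici 0) t)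
    (hx : LaplaceConvergent x s) (hx' : LaplaceConvergent x' s)
    (hy : LaplaceConvergent y s) (hy' : LaplaceConvergent y' s)
    (hode : ∀ t > 0, y'' t + p * y' t + q * y t = b * x' t + d * x t) :
    (s ^ 2 + p * s + q) * laplace y s =
      (b * s + d) * laplace x s + (s + p) * y 0 + y' 0 - b * x 0 := by
  -- The equation itself shows that the transform of `y''` converges.
  have hy'' : HasLaplace y'' s (b * laplace x' s + d * laplace x s -
      (p * laplace y' s + q * laplace y s)) :=
    (((hx'.hasLaplace.const_mul b).add (hx.hasLaplace.const_mul d)).sub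
      ((hy'.hasLaplace.const_mul p).add (hy.hasLaplace.const_mul q))).congr
      fun t ht => by linear_combination -hode t ht
  have hLx' := laplace_deriv hdx hx hx'
  have hLy' := laplace_deriv hdy hy hy'
  have hLy'' := laplace_deriv hdy' hy' hy''.1
  linear_combination hy''.2 - hLy'' + b * hLx' - (s + p) * hLy'

theorem stmt14_general
    (hdx : ∀ t ∈ Ici (0 : ℝ), HasDerivWithinAt x (x' t) (Ici 0) t)
    (hdy : ∀ t ∈ Ici (0 : ℝ), HasDerivWithinAt y (y' t) (Ici 0) t)
    (hdy' : ∀ t ∈ Ici (0 : ℝ), HasDerivWithinAt y' (y'' t) (Ici 0) t)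
    (hx : LaplaceConvergent x s) (hx' : LaplaceConvergent x' s)
    (hy : LaplaceConvergent y s) (hy' : LaplaceConvergent y' s)
    (hx0 : x 0 = 0) (hy0 : y 0 = 0) (hy'0 : y' 0 = 0)
    (hode : ∀ t > 0, y'' t + p * y' t + q * y t = b * x' t + d * x t)
    (hden : s ^ 2 + p * s + q ≠ 0) (hL : laplace x s ≠ 0) :
    laplace y s / laplace x s = (b * s + d) / (s ^ 2 + p * s + q) := by
  have htransform := laplace_of_second_order_ode hdx hdy hdy' hx hx' hy hy' hode
  rw [hx0, hy0, hy'0] at htransform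
  rw [div_eq_div_iff hL hden]
  linear_combination htransform

end SecondOrder

theorem stmt14 (m c k ca : ℝ) (hm : 0 < m) (hc : 0 < c) (hk : 0 < k) (hca : 0 < ca)
    (s : ℂ) (a : ℝ) (ha : a < s.re)
    (z₁ z₂ z₁' z₁'' z₂' z₂'' : ℝ → ℂ)
    (hdz₁ : ∀ t ∈ Set.Ici (0 : ℝ), HasDerivWithinAt z₁ (z₁' t) (Set.Ici 0) t)
    (hdz₁' : ∀ t ∈ Set.Ici (0 : ℝ), HasDerivWithinAt z₁' (z₁'' t) (Set.Ici 0) t)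
    (hdz₂ : ∀ t ∈ Set.Ici (0 : ℝ), HasDerivWithinAt z₂ (z₂' t) (Set.Ici 0) t)
    (hdz₂' : ∀ t ∈ Set.Ici (0 : ℝ), HasDerivWithinAt z₂' (z₂'' t) (Set.Ici 0) t)
    (hcz₁' : ContinuousOn z₁' (Set.Ici 0)) (hcz₁'' : ContinuousOn z₁'' (Set.Ici 0))
    (hcz₂' : ContinuousOn z₂' (Set.Ici 0)) (hcz₂'' : ContinuousOn z₂'' (Set.Ici 0))
    (hez₁ : ExpOrder z₁ a) (hez₁' : ExpOrder z₁' a)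
    (hez₂ : ExpOrder z₂ a) (hez₂' : ExpOrder z₂' a) (hez₂'' : ExpOrder z₂'' a)
    (hinit₁ : z₁ 0 = 0) (hinit₂ : z₂ 0 = 0) (hinit₂' : z₂' 0 = 0)
    (hode : ∀ t ≥ (0 : ℝ),
      z₂'' t + (((c + ca) / m : ℝ) : ℂ) * z₂' t + ((k / m : ℝ) : ℂ) * z₂ t
        = ((c / m : ℝ) : ℂ) * z₁' t + ((k / m : ℝ) : ℂ) * z₁ t)
    (hden : s ^ 2 + (((c + ca) / m : ℝ) : ℂ) * s + ((k / m : ℝ) : ℂ) ≠ 0)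
    (hL : laplace z₁ s ≠ 0) :
    laplace z₂ s / laplace z₁ s = (((c / m : ℝ) : ℂ) * s + ((k / m : ℝ) : ℂ)) / (s ^ 2 + (((c + ca) / m : ℝ) : ℂ) * s + ((k / m : ℝ) : ℂ)) :=
  stmt14_general hdz₁ hdz₂ hdz₂'
    (hez₁.laplaceConvergent_of_continuousOn (HasDerivWithinAt.continuousOn hdz₁) ha)
    (hez₁'.laplaceConvergent_of_continuousOn hcz₁' ha)
    (hez₂.laplaceConvergent_of_continuousOn (HasDerivWithinAt.continuousOn hdz₂) ha)
    (hez₂'.laplaceConvergent_of_continuousOn hcz₂' ha)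
    hinit₁ hinit₂ hinit₂' (fun t ht => hode t ht.le) hden hL
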